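/- arXiv:2208.11447 — 2 statements merged into one kernel-verified Lean document; each statement's English description precedes it below -/
import Mathlib

section
/- Let A ∈ ℂ^{N×N}, b ∈ ℂᴺ, let ε ∈ [0,1), and let S ∈ ℂ^{s×N} be an ε-subspace embedding for the Krylov space 𝒦_{m+1}(A,b). Let V ∈ ℂ^{N×m} have full column rank with range(V) = 𝒦_m(A,b), b ∈ range(V), and suppose the whitening condition (SV)ᴴSV = I_m holds. Let μ be a nonnegative Borel measure on [0,∞), set H := (VᴴV)⁻¹VᴴAV and Ĥ := VᴴSᴴSAV, assume tI+H and tI+Ĥ are invertible for μ-almost every t ≥ 0 and that t ↦ (tI+H)⁻¹ and t ↦ (tI+Ĥ)⁻¹ are μ-Bochner integrable, and define f(M) := ∫₀^∞ (tI+M)⁻¹ dμ(t) for M ∈ {H, Ĥ}. Then the FOM approximant f_m := V f(H) (VᴴV)⁻¹Vᴴ b and the sketched FOM approximant f̂_m := V f(Ĥ) VᴴSᴴS b satisfy ‖f_m − f̂_m‖ ≤ √((1+ε)/(1−ε)) · ‖b‖ · ‖f(H) − f(Ĥ)‖, where the last norm is the spectral norm. -/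
open Matrix MeasureTheory

noncomputable section

/-- `E n` is the Euclidean space `ℂⁿ`. -/
abbrev E (n : ℕ) : Type := EuclideanSpace ℂ (Fin n)

/-- Action of a (rectangular) matrix on a Euclidean vector. -/
def mulE {p q : ℕ} (M : Matrix (Fin p) (Fin q) ℂ) (v : E q) : E p :=
  Matrix.toEuclideanLin M v

/-- Spectral (operator 2-) norm of a (rectangular) matrix. -/
def opNorm {p q : ℕ} (M : Matrix (Fin p) (Fin q) ℂ) : ℝ :=
  ‖LinearMap.toContinuousLinearMap (Matrix.toEuclideanLin M)‖

/-- The `m`-th Krylov space `𝒦_m(A,b) = span{b, Ab, …, A^{m-1}b}`. -/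
def Krylov {N : ℕ} (A : Matrix (Fin N) (Fin N) ℂ) (b : E N) (m : ℕ) :
    Submodule ℂ (E N) :=
  Submodule.span ℂ {v | ∃ j < m, v = mulE (A ^ j) b}

/-- `S` is an `ε`-subspace embedding for the subspace `𝒱`. -/
def IsSubspaceEmbedding {s N : ℕ} (S : Matrix (Fin s) (Fin N) ℂ) (ε : ℝ)
    (𝒱 : Submodule ℂ (E N)) : Prop :=
  ∀ v ∈ 𝒱, (1 - ε) * ‖v‖ ^ 2 ≤ ‖mulE S v‖ ^ 2 ∧ ‖mulE S v‖ ^ 2 ≤ (1 + ε) * ‖v‖ ^ 2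

/-- A matrix is positive real if `Re(vᴴAv) > 0` for all nonzero `v`. -/
def IsPositiveReal {N : ℕ} (A : Matrix (Fin N) (Fin N) ℂ) : Prop :=
  ∀ v : E N, v ≠ 0 → 0 < (inner ℂ v (mulE A v) : ℂ).re

attribute [local instance] Matrix.frobeniusNormedAddCommGroup Matrix.frobeniusNormedSpace

theorem mulE_mul {p q r : ℕ} (M : Matrix (Fin p) (Fin q) ℂ) (K : Matrix (Fin q) (Fin r) ℂ)
    (v : E r) : mulE (M * K) v = mulE M (mulE K v) := by
  simp [mulE, Matrix.toLpLin_apply, Matrix.mulVec_mulVec]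

theorem mulE_one {p : ℕ} (v : E p) : mulE (1 : Matrix (Fin p) (Fin p) ℂ) v = v := by
  simp [mulE]

theorem mulE_norm_of_white {s m : ℕ} (W : Matrix (Fin s) (Fin m) ℂ) (hW : Wᴴ * W = 1)
    (v : E m) : ‖mulE W v‖ = ‖v‖ := by
  have h : inner ℂ (mulE W v) (mulE W v) = inner ℂ v v := by
    have h1 : inner ℂ (mulE W v) (mulE W v) = inner ℂ v (mulE (Wᴴ) (mulE W v)) := by
      simp only [mulE]
      rw [Matrix.toEuclideanLin_conjTranspose_eq_adjoint, LinearMap.adjoint_inner_right]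
    rw [h1, ← mulE_mul, hW, mulE_one]
  rw [inner_self_eq_norm_sq_to_K, inner_self_eq_norm_sq_to_K] at h
  have h2 : ‖mulE W v‖ ^ 2 = ‖v‖ ^ 2 := by exact_mod_cast h
  exact (sq_eq_sq₀ (norm_nonneg _) (norm_nonneg _)).1 h2

open scoped ComplexOrder in
theorem gram_inv {N m : ℕ} (V : Matrix (Fin N) (Fin m) ℂ)
    (hV : Function.Injective (Matrix.toEuclideanLin V)) : (Vᴴ * V)⁻¹ * (Vᴴ * V) = 1 := by
  apply Matrix.nonsing_inv_mul
  rw [← Matrix.isUnit_iff_isUnit_det]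
  have hinj : Function.Injective V.mulVec := by
    intro x y h
    have := @hV (WithLp.toLp 2 x) (WithLp.toLp 2 y) (by simp [Matrix.toLpLin_apply, h])
    simpa using this
  exact (Matrix.PosDef.conjTranspose_mul_self V hinj).isUnit

theorem fom_core {N s m : ℕ} (A : Matrix (Fin N) (Fin N) ℂ) (b : E N)
    (ε : ℝ) (hε0 : 0 ≤ ε) (hε1 : ε < 1)
    (S : Matrix (Fin s) (Fin N) ℂ)
    (hS : IsSubspaceEmbedding S ε (Krylov A b (m + 1)))
    (V : Matrix (Fin N) (Fin m) ℂ)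
    (hV : Function.Injective (Matrix.toEuclideanLin V))
    (hrange : LinearMap.range (Matrix.toEuclideanLin V) = Krylov A b m)
    (hb : b ∈ LinearMap.range (Matrix.toEuclideanLin V))
    (hwhite : (S * V)ᴴ * (S * V) = (1 : Matrix (Fin m) (Fin m) ℂ))
    (F G : Matrix (Fin m) (Fin m) ℂ) :
    ‖mulE (V * F * (Vᴴ * V)⁻¹ * Vᴴ) b - mulE (V * G * Vᴴ * Sᴴ * S) b‖
      ≤ Real.sqrt ((1 + ε) / (1 - ε)) * ‖b‖ * opNorm (F - G) := by
  have hK : ∀ w, mulE V w ∈ Krylov A b (m + 1) := by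
    intro w
    have h1 : mulE V w ∈ Krylov A b m := by rw [← hrange]; exact ⟨w, rfl⟩
    refine Submodule.span_mono ?_ h1
    rintro v ⟨j, hj, rfl⟩
    exact ⟨j, by omega, rfl⟩
  have hn : ∀ w, ‖mulE S (mulE V w)‖ = ‖w‖ := by
    intro w
    rw [← mulE_mul]; exact mulE_norm_of_white _ hwhite w
  obtain ⟨c, hc⟩ := hb
  have hbc : b = mulE V c := hc.symm
  have e1 : mulE (V * F * (Vᴴ * V)⁻¹ * Vᴴ) b = mulE V (mulE F c) := by
    rw [hbc, ← mulE_mul, ← mulE_mul]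
    congr 1
    rw [Matrix.mul_assoc, Matrix.mul_assoc, gram_inv V hV, Matrix.mul_one]
  have e2 : mulE (V * G * Vᴴ * Sᴴ * S) b = mulE V (mulE G c) := by
    rw [hbc, ← mulE_mul, ← mulE_mul]
    congr 1
    have : V * G * Vᴴ * Sᴴ * S * V = V * G * ((S * V)ᴴ * (S * V)) := by
      simp only [Matrix.conjTranspose_mul, Matrix.mul_assoc]
    rw [this, hwhite, Matrix.mul_one]
  have e3 : mulE V (mulE F c) - mulE V (mulE G c) = mulE V (mulE (F - G) c) := by
    simp [mulE]
  rw [e1, e2, e3]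
  have h1 : ‖mulE (F - G) c‖ ≤ opNorm (F - G) * ‖c‖ :=
    (LinearMap.toContinuousLinearMap (Matrix.toEuclideanLin (F - G))).le_opNorm c
  have h2 := (hS _ (hK (mulE (F - G) c))).1
  have h3 := (hS _ (hK c)).2
  rw [hn] at h2 h3
  rw [← hbc] at h3
  have hop : 0 ≤ opNorm (F - G) := norm_nonneg _
  have hpos : 0 < 1 - ε := by linarith
  refine (sq_le_sq₀ (norm_nonneg _) (by positivity)).1 ?_
  rw [mul_pow, mul_pow, Real.sq_sqrt (by positivity), div_mul_eq_mul_div, div_mul_eq_mul_div,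
    le_div_iff₀ hpos]
  calc _ ≤ ‖mulE (F - G) c‖ ^ 2 := by linarith
    _ ≤ (opNorm (F - G) * ‖c‖) ^ 2 := by gcongr
    _ = ‖c‖ ^ 2 * opNorm (F - G) ^ 2 := by ring
    _ ≤ _ := by gcongr

/-- **Distance between FOM and sketched FOM** (Corollary 2.2): with
`H = (VᴴV)⁻¹VᴴAV`, `Ĥ = VᴴSᴴSAV` and `f(M) = ∫₀^∞ (tI+M)⁻¹ dμ(t)`, the FOM
approximant `f_m = V f(H) (VᴴV)⁻¹Vᴴ b` and the sketched FOM approximant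
`f̂_m = V f(Ĥ) VᴴSᴴS b` satisfy
`‖f_m − f̂_m‖ ≤ √((1+ε)/(1−ε)) ‖b‖ ‖f(H) − f(Ĥ)‖`. -/
theorem sketched_fAb_stmt1 {N s m : ℕ} (A : Matrix (Fin N) (Fin N) ℂ) (b : E N)
    (ε : ℝ) (hε0 : 0 ≤ ε) (hε1 : ε < 1)
    (S : Matrix (Fin s) (Fin N) ℂ)
    (hS : IsSubspaceEmbedding S ε (Krylov A b (m + 1)))
    (V : Matrix (Fin N) (Fin m) ℂ)
    (hV : Function.Injective (Matrix.toEuclideanLin V))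
    (hrange : LinearMap.range (Matrix.toEuclideanLin V) = Krylov A b m)
    (hb : b ∈ LinearMap.range (Matrix.toEuclideanLin V))
    (hwhite : (S * V)ᴴ * (S * V) = (1 : Matrix (Fin m) (Fin m) ℂ))
    (μ : MeasureTheory.Measure ℝ)
    (hinv : ∀ᵐ (t : ℝ) ∂(μ.restrict (Set.Ici (0 : ℝ))),
      IsUnit ((t : ℂ) • (1 : Matrix (Fin m) (Fin m) ℂ) + (Vᴴ * V)⁻¹ * Vᴴ * A * V)
      ∧ IsUnit ((t : ℂ) • (1 : Matrix (Fin m) (Fin m) ℂ) + Vᴴ * Sᴴ * S * A * V))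
    (hintH : @MeasureTheory.IntegrableOn ℝ (Matrix (Fin m) (Fin m) ℂ) _
      PseudoMetricSpace.toUniformSpace.toTopologicalSpace _
      (fun t : ℝ =>
        ((t : ℂ) • (1 : Matrix (Fin m) (Fin m) ℂ) + (Vᴴ * V)⁻¹ * Vᴴ * A * V)⁻¹)
      (Set.Ici (0 : ℝ)) μ)
    (hintHhat : @MeasureTheory.IntegrableOn ℝ (Matrix (Fin m) (Fin m) ℂ) _
      PseudoMetricSpace.toUniformSpace.toTopologicalSpace _
      (fun t : ℝ =>
        ((t : ℂ) • (1 : Matrix (Fin m) (Fin m) ℂ) + Vᴴ * Sᴴ * S * A * V)⁻¹)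
      (Set.Ici (0 : ℝ)) μ) :
    ‖mulE (V * (∫ t in Set.Ici (0 : ℝ),
            ((t : ℂ) • (1 : Matrix (Fin m) (Fin m) ℂ) + (Vᴴ * V)⁻¹ * Vᴴ * A * V)⁻¹ ∂μ)
          * (Vᴴ * V)⁻¹ * Vᴴ) b
        - mulE (V * (∫ t in Set.Ici (0 : ℝ),
            ((t : ℂ) • (1 : Matrix (Fin m) (Fin m) ℂ) + Vᴴ * Sᴴ * S * A * V)⁻¹ ∂μ)
          * Vᴴ * Sᴴ * S) b‖
      ≤ Real.sqrt ((1 + ε) / (1 - ε)) * ‖b‖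
          * opNorm ((∫ t in Set.Ici (0 : ℝ),
              ((t : ℂ) • (1 : Matrix (Fin m) (Fin m) ℂ) + (Vᴴ * V)⁻¹ * Vᴴ * A * V)⁻¹ ∂μ)
            - ∫ t in Set.Ici (0 : ℝ),
              ((t : ℂ) • (1 : Matrix (Fin m) (Fin m) ℂ) + Vᴴ * Sᴴ * S * A * V)⁻¹ ∂μ) := by
  exact fom_core A b ε hε0 hε1 S hS V hV hrange hb hwhite _ _
end
end

section
/- Let A ∈ ℂ^{N×N} with δ := min{Re(vᴴAv) : ‖v‖ = 1} > 0, let b ∈ ℂᴺ, t ≥ 0, and let x_m ∈ 𝒦_m(A,b) minimize ‖b − (tI+A)x‖ over x ∈ 𝒦_m(A,b) (the GMRES approximant for the shifted system). Then ‖b − (tI+A)x_m‖ ≤ ‖b‖·(sin β_t)^m, where cos β_t = (t+δ)/‖tI+A‖ and sin β_t = √(1 − cos²β_t). -/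
open Matrix MeasureTheory

noncomputable section

lemma krylov_step {N : ℕ} (A : Matrix (Fin N) (Fin N) ℂ) (b : E N) (m : ℕ) (x : E N)
    (hx : x ∈ Krylov A b m) : mulE A x ∈ Krylov A b (m + 1) := by
  unfold Krylov at hx
  induction hx using Submodule.span_induction with
  | mem y hy =>
    obtain ⟨j, hj, rfl⟩ := hy
    refine Submodule.subset_span ⟨j + 1, by omega, ?_⟩
    simp [mulE, pow_succ', Matrix.toLpLin_apply]
  | zero => simp [mulE]
  | add y z _ _ hy hz =>
    have : mulE A (y + z) = mulE A y + mulE A z := by simp [mulE]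
    rw [this]; exact Submodule.add_mem _ hy hz
  | smul c y _ hy =>
    have : mulE A (c • y) = c • mulE A y := by simp [mulE]
    rw [this]; exact Submodule.smul_mem _ _ hy

lemma krylov_mono {N : ℕ} (A : Matrix (Fin N) (Fin N) ℂ) (b : E N) (m : ℕ) :
    Krylov A b m ≤ Krylov A b (m + 1) := by
  apply Submodule.span_mono
  rintro v ⟨j, hj, rfl⟩
  exact ⟨j, by omega, rfl⟩

lemma mulE_shift {N : ℕ} (A : Matrix (Fin N) (Fin N) ℂ) (t : ℂ) (x : E N) :
    mulE (t • (1 : Matrix (Fin N) (Fin N) ℂ) + A) x = t • x + mulE A x := by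
  simp [mulE]

lemma norm_step {N : ℕ} (B : Matrix (Fin N) (Fin N) ℂ) (d : ℝ) (hd : 0 ≤ d)
    (hB : ∀ v : E N, d * ‖v‖ ^ 2 ≤ (inner ℂ v (mulE B v) : ℂ).re) (r : E N) :
    ‖r - ((d / opNorm B ^ 2 : ℝ) : ℂ) • mulE B r‖ ≤ ‖r‖ * √(1 - (d / opNorm B) ^ 2) := by
  have hop : ‖mulE B r‖ ≤ opNorm B * ‖r‖ :=
    (LinearMap.toContinuousLinearMap (Matrix.toEuclideanLin B)).le_opNorm r
  have h0 : 0 ≤ opNorm B := norm_nonneg _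
  rcases h0.eq_or_lt with h | h
  · simp [← h]
  have h1 : ‖mulE B r‖ ^ 2 ≤ opNorm B ^ 2 * ‖r‖ ^ 2 := by
    rw [← mul_pow]; gcongr
  have h2 := hB r
  set α : ℝ := d / opNorm B ^ 2 with hα
  have hα0 : 0 ≤ α := by positivity
  have key : ‖r - (α : ℂ) • mulE B r‖ ^ 2 ≤ ‖r‖ ^ 2 * (1 - (d / opNorm B) ^ 2) := by
    rw [@norm_sub_sq ℂ, inner_smul_right, norm_smul, mul_pow]
    have e1 : RCLike.re ((α : ℂ) * inner ℂ r (mulE B r))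
        = α * (inner ℂ r (mulE B r) : ℂ).re := by
      simp
    have e2 : ‖(α : ℂ)‖ ^ 2 = α ^ 2 := by simp
    rw [e1, e2]
    have h3 := mul_le_mul_of_nonneg_left h2 hα0
    have h4 := mul_le_mul_of_nonneg_left h1 (sq_nonneg α)
    have e3 : α ^ 2 * (opNorm B ^ 2 * ‖r‖ ^ 2) = (d / opNorm B) ^ 2 * ‖r‖ ^ 2 := by
      rw [hα]; field_simp
    have e4 : α * (d * ‖r‖ ^ 2) = (d / opNorm B) ^ 2 * ‖r‖ ^ 2 := by
      rw [hα]; field_simp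
    linarith
  calc _ ≤ √(‖r‖ ^ 2 * (1 - (d / opNorm B) ^ 2)) := Real.le_sqrt_of_sq_le key
    _ = _ := by rw [Real.sqrt_mul (sq_nonneg _), Real.sqrt_sq (norm_nonneg _)]

/-- Elman-type GMRES convergence bound for the shifted system `(tI+A)x = b`:
if `δ = min{Re(vᴴAv) : ‖v‖ = 1} > 0` and `x_m ∈ 𝒦_m(A,b)` minimizes the residual
norm over the Krylov space, then `‖b − (tI+A)x_m‖ ≤ ‖b‖ (sin β_t)^m` where
`cos β_t = (t+δ)/‖tI+A‖`. -/
theorem sketched_fAb_stmt13 {N m : ℕ} (A : Matrix (Fin N) (Fin N) ℂ) (b : E N) (δ : ℝ)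
    (hδ : IsLeast {r : ℝ | ∃ v : E N, ‖v‖ = 1 ∧ r = (inner ℂ v (mulE A v) : ℂ).re} δ)
    (hδpos : 0 < δ) (t : ℝ) (ht : 0 ≤ t) (xm : E N)
    (hmem : xm ∈ Krylov A b m)
    (hmin : ∀ x ∈ Krylov A b m,
      ‖b - mulE ((t : ℂ) • (1 : Matrix (Fin N) (Fin N) ℂ) + A) xm‖
        ≤ ‖b - mulE ((t : ℂ) • (1 : Matrix (Fin N) (Fin N) ℂ) + A) x‖) :
    ‖b - mulE ((t : ℂ) • (1 : Matrix (Fin N) (Fin N) ℂ) + A) xm‖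
      ≤ ‖b‖ * Real.sqrt (1 -
          ((t + δ) / opNorm ((t : ℂ) • (1 : Matrix (Fin N) (Fin N) ℂ) + A)) ^ 2) ^ m := by
  have hB : ∀ v : E N, (t + δ) * ‖v‖ ^ 2 ≤
      (inner ℂ v (mulE ((t : ℂ) • (1 : Matrix (Fin N) (Fin N) ℂ) + A) v) : ℂ).re := by
    intro v
    have hA : δ * ‖v‖ ^ 2 ≤ (inner ℂ v (mulE A v) : ℂ).re := by
      by_cases hv : v = 0
      · simp [hv]
      have hn : 0 < ‖v‖ := norm_pos_iff.mpr hv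
      have := hδ.2 ⟨((‖v‖⁻¹ : ℝ) : ℂ) • v, by simp [norm_smul, hn.ne'], rfl⟩
      have e : mulE A (((‖v‖⁻¹ : ℝ) : ℂ) • v) = ((‖v‖⁻¹ : ℝ) : ℂ) • mulE A v := by
        simp [mulE]
      rw [e, inner_smul_left, inner_smul_right, Complex.conj_ofReal, Complex.re_ofReal_mul,
        Complex.re_ofReal_mul] at this
      calc δ * ‖v‖ ^ 2 ≤ _ := mul_le_mul_of_nonneg_right this (sq_nonneg _)
        _ = _ := by field_simp
    rw [mulE_shift, inner_add_right, inner_smul_right, inner_self_eq_norm_sq_to_K,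
      Complex.add_re, Complex.re_ofReal_mul]
    have : (((‖v‖ : ℂ)) ^ 2).re = ‖v‖ ^ 2 := by norm_cast
    simp only [Complex.coe_algebraMap, this]
    linarith
  have ex : ∀ k : ℕ, ∃ x ∈ Krylov A b k,
      ‖b - mulE ((t : ℂ) • (1 : Matrix (Fin N) (Fin N) ℂ) + A) x‖
      ≤ ‖b‖ * Real.sqrt (1 -
          ((t + δ) / opNorm ((t : ℂ) • (1 : Matrix (Fin N) (Fin N) ℂ) + A)) ^ 2) ^ k := by
    intro k
    induction k with
    | zero => exact ⟨0, Submodule.zero_mem _, by simp [mulE]⟩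
    | succ k ih =>
      obtain ⟨x, hx, hle⟩ := ih
      have hs := norm_step _ (t + δ) (by linarith) hB
        (b - mulE ((t : ℂ) • (1 : Matrix (Fin N) (Fin N) ℂ) + A) x)
      set α : ℂ := (((t + δ) / opNorm ((t : ℂ) • (1 : Matrix (Fin N) (Fin N) ℂ) + A) ^ 2 : ℝ) : ℂ)
      have hx' := krylov_mono A b k hx
      refine ⟨x + α • (b - mulE ((t : ℂ) • (1 : Matrix (Fin N) (Fin N) ℂ) + A) x), ?_, ?_⟩
      · refine Submodule.add_mem _ hx' (Submodule.smul_mem _ _ (Submodule.sub_mem _ ?_ ?_))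
        · exact Submodule.subset_span ⟨0, by omega, by simp [mulE]⟩
        · rw [mulE_shift]
          exact Submodule.add_mem _ (Submodule.smul_mem _ _ hx') (krylov_step A b k x hx)
      · have lin : ∀ (M : Matrix (Fin N) (Fin N) ℂ) (y z : E N),
            b - mulE M (y + α • z) = (b - mulE M y) - α • mulE M z := by
          intro M y z
          simp only [mulE, map_add, map_smul]
          abel
        rw [lin, pow_succ, ← mul_assoc]
        exact hs.trans (mul_le_mul_of_nonneg_right hle (Real.sqrt_nonneg _))
  obtain ⟨x, hx, hle⟩ := ex m
  exact (hmin x hx).trans hle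
end
end
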